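/- For all positive integers m and n and every m-homogeneous polynomial P(z) = ∑_{|α|=m} a_α z^α on ℂ^n, one has (∑_{|α|=m} |a_α|^{2m/(m+1)})^{(m+1)/(2m)} ≤ (√2)^{m-1} · √m · (m^m/m!) · sup_{z ∈ 𝔻^n} |∑_{|α|=m} a_α z^α|. (Bohnenblust–Hille polynomial inequality with the explicit constant obtained in the paper's proof.) -/

import Mathlib

open Finset

/-- Evaluation of the `m`-homogeneous polynomial on `ℂ^n` with coefficient family `a`
(indexed by the multi-indices `α` with `|α| = m`) at the point `z`. -/
noncomputable def mhEval (n m : ℕ) (a : (Fin n → ℕ) → ℂ) (z : Fin n → ℂ) : ℂ :=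
  ∑ α ∈ Finset.Nat.antidiagonalTuple n m, a α * ∏ i, z i ^ α i

/-- The supremum of `|P(z)|` over the open unit polydisc `𝔻^n`. -/
noncomputable def polydiscSup (n m : ℕ) (a : (Fin n → ℕ) → ℂ) : ℝ :=
  sSup {x : ℝ | ∃ z : Fin n → ℂ, (∀ i, ‖z i‖ < 1) ∧ x = ‖mhEval n m a z‖}

lemma bh_antidiag_eq (n m : ℕ) :
    Finset.Nat.antidiagonalTuple n m = Finset.piAntidiag (Finset.univ : Finset (Fin n)) m := by
  ext α
  simp [Finset.Nat.mem_antidiagonalTuple, Finset.mem_piAntidiag]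

lemma bh_le_of_mem {n m : ℕ} {α : Fin n → ℕ} (h : α ∈ Finset.Nat.antidiagonalTuple n m)
    (j : Fin n) : α j ≤ m := by
  rw [Finset.Nat.mem_antidiagonalTuple] at h
  rw [← h]
  exact Finset.single_le_sum (f := α) (fun _ _ => Nat.zero_le _) (Finset.mem_univ j)

lemma bh_blei_term (n m : ℕ) (hm : 0 < m) (α : Fin n → ℕ) (hα : ∑ i, α i = m)
    (b : ℝ) (hb : 0 ≤ b) (S : Fin n → ℝ) (hS : ∀ j, 0 ≤ S j) (T : ℝ) (hT : 0 < T)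
    (hz : ∀ j, 0 < α j → b ^ 2 / m ≤ S j ^ 2) (w : ℝ) (hw : 1 ≤ w) :
    b ^ ((2 * (m : ℝ)) / ((m : ℝ) + 1)) ≤ T ^ ((2 * (m : ℝ)) / ((m : ℝ) + 1)) *
      ((1 / ((m : ℝ) + 1)) * (∑ j, α j * (b ^ 2 / (S j * T)) + w * ((∏ j, S j ^ α j) / T ^ m))) := by
  have hm' : (0 : ℝ) < m := by exact_mod_cast hm
  have hprod : 0 ≤ ∏ j, S j ^ α j := Finset.prod_nonneg fun j _ => pow_nonneg (hS j) _
  have hw0 : 0 < w := by linarith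
  rcases hb.eq_or_lt with h0 | h0
  · rw [← h0, Real.zero_rpow (by positivity)]
    have : ∀ j, 0 ≤ (α j : ℝ) * ((0:ℝ) ^ 2 / (S j * T)) := fun j => by simp
    have := Finset.sum_nonneg (s := Finset.univ) fun j _ => this j
    positivity
  have hSpos : ∀ j, 0 < α j → 0 < S j := by
    intro j hj
    have h1 := hz j hj
    have h2 : 0 < b ^ 2 / m := by positivity
    rcases (hS j).eq_or_lt with h | h
    · rw [← h] at h1
      norm_num at h1
      linarith
    · exact h
  have hprodpos : 0 < ∏ j, S j ^ α j := by
    apply Finset.prod_pos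
    intro j _
    rcases Nat.eq_zero_or_pos (α j) with h | h
    · simp [h]
    · exact pow_pos (hSpos j h) _
  have hαR : ∑ i, (α i : ℝ) = m := by exact_mod_cast hα
  have key := Real.geom_mean_le_arith_mean_weighted (Finset.univ : Finset (Option (Fin n)))
    (fun o => o.elim (1 / ((m : ℝ) + 1)) (fun j => (α j : ℝ) / (m + 1)))
    (fun o => o.elim (w * ((∏ j, S j ^ α j) / T ^ m)) (fun j => b ^ 2 / (S j * T)))
    (by rintro (_ | j) _ <;> simp <;> positivity)
    (by
      rw [Fintype.sum_option]
      simp only [Option.elim]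
      rw [← Finset.sum_div, hαR]
      field_simp
      ring)
    (by
      rintro (_ | j) _
      · simp only [Option.elim]; positivity
      · simp only [Option.elim]
        have := hS j
        positivity)
  rw [Fintype.sum_option, Fintype.prod_option] at key
  simp only [Option.elim] at key
  have e1 : ∏ j, (b ^ 2 / (S j * T)) ^ ((α j : ℝ) / (m + 1)) =
      ((b ^ 2) ^ m / ((∏ j, S j ^ α j) * T ^ m)) ^ (1 / ((m : ℝ) + 1)) := by
    have : ∀ j, (b ^ 2 / (S j * T)) ^ ((α j : ℝ) / (m + 1)) =
        ((b ^ 2 / (S j * T)) ^ (α j)) ^ (1 / ((m : ℝ) + 1)) := by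
      intro j
      have := hS j
      rw [← Real.rpow_natCast (b ^ 2 / (S j * T)) (α j), ← Real.rpow_mul (by positivity)]
      congr 1
      ring
    rw [Finset.prod_congr rfl fun j _ => this j, Real.finsetProd_rpow]
    · congr 1
      simp_rw [div_pow, mul_pow]
      rw [Finset.prod_div_distrib, Finset.prod_mul_distrib, Finset.prod_pow_eq_pow_sum,
        Finset.prod_pow_eq_pow_sum, hα]
    · intro j _
      have := hS j
      positivity
  have e2 : (b / T) ^ ((2 * (m : ℝ)) / ((m : ℝ) + 1)) ≤
      (w * ((∏ j, S j ^ α j) / T ^ m)) ^ (1 / ((m : ℝ) + 1)) *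
       ∏ j, (b ^ 2 / (S j * T)) ^ ((α j : ℝ) / (m + 1)) := by
    rw [e1, ← Real.mul_rpow (by positivity) (by positivity)]
    have : (b / T) ^ ((2 * (m : ℝ)) / ((m : ℝ) + 1)) =
      ((b / T) ^ (2 * m)) ^ (1 / ((m : ℝ) + 1)) := by
      rw [← Real.rpow_natCast, ← Real.rpow_mul (by positivity)]
      congr 1
      push_cast
      ring
    rw [this]
    apply Real.rpow_le_rpow (by positivity) _ (by positivity)
    have : w * ((∏ j, S j ^ α j) / T ^ m) * ((b ^ 2) ^ m / ((∏ j, S j ^ α j) * T ^ m)) =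
        w * (b / T) ^ (2 * m) := by
      rw [div_pow, pow_mul, pow_mul, ← pow_mul T, mul_comm 2 m, pow_mul T]
      field_simp
    rw [this]
    have : 0 ≤ (b / T) ^ (2 * m) := by positivity
    nlinarith
  have e3 : b ^ ((2 * (m : ℝ)) / ((m : ℝ) + 1)) = T ^ ((2 * (m : ℝ)) / ((m : ℝ) + 1)) *
      (b / T) ^ ((2 * (m : ℝ)) / ((m : ℝ) + 1)) := by
    rw [← Real.mul_rpow hT.le (by positivity)]
    congr 1
    field_simp
  rw [e3]
  apply mul_le_mul_of_nonneg_left _ (by positivity)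
  refine (e2.trans key).trans (le_of_eq ?_)
  rw [mul_add, Finset.mul_sum, add_comm]
  congr 1
  apply Finset.sum_congr rfl
  intro j _
  ring

lemma bh_blei (n m : ℕ) (hm : 0 < m) (b : (Fin n → ℕ) → ℝ) (hb : ∀ α, 0 ≤ b α)
    (S : Fin n → ℝ) (hS : ∀ j, 0 ≤ S j)
    (hS2 : ∀ j, m * S j ^ 2 = ∑ α ∈ Finset.Nat.antidiagonalTuple n m, α j * b α ^ 2) :
    (∑ α ∈ Finset.Nat.antidiagonalTuple n m, b α ^ ((2 * (m : ℝ)) / ((m : ℝ) + 1)))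
      ^ (((m : ℝ) + 1) / (2 * (m : ℝ))) ≤ ∑ j, S j := by
  have hm' : (0 : ℝ) < m := by exact_mod_cast hm
  set T := ∑ j, S j with hTdef
  have hT0 : 0 ≤ T := Finset.sum_nonneg fun j _ => hS j
  have hz : ∀ α ∈ Finset.Nat.antidiagonalTuple n m, ∀ j, 0 < α j → b α ^ 2 / m ≤ S j ^ 2 := by
    intro α hα j hj
    rw [div_le_iff₀ hm', mul_comm, hS2 j]
    refine le_trans ?_ (Finset.single_le_sum (f := fun α => (α j : ℝ) * b α ^ 2)
      (fun _ _ => by positivity) hα)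
    have : (1 : ℝ) ≤ α j := by exact_mod_cast hj
    nlinarith [sq_nonneg (b α)]
  suffices h : ∑ α ∈ Finset.Nat.antidiagonalTuple n m, b α ^ ((2 * (m : ℝ)) / ((m : ℝ) + 1)) ≤
      T ^ ((2 * (m : ℝ)) / ((m : ℝ) + 1)) by
    have h2 := Real.rpow_le_rpow (Finset.sum_nonneg fun α _ => Real.rpow_nonneg (hb α) _) h
      (z := ((m : ℝ) + 1) / (2 * (m : ℝ))) (by positivity)
    rw [← Real.rpow_mul hT0] at h2
    have : (2 * (m : ℝ)) / ((m : ℝ) + 1) * (((m : ℝ) + 1) / (2 * (m : ℝ))) = 1 := by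
      field_simp
    rwa [this, Real.rpow_one] at h2
  rcases hT0.eq_or_lt with h0 | hT
  · have hSz : ∀ j, S j = 0 := fun j =>
      (Finset.sum_eq_zero_iff_of_nonneg (fun j _ => hS j)).1 (hTdef ▸ h0.symm) j (Finset.mem_univ j)
    rw [← h0, Real.zero_rpow (by positivity)]
    apply Finset.sum_nonpos
    intro α hα
    have hex : ∃ j, 0 < α j := by
      by_contra hcon
      push Not at hcon
      rw [Finset.Nat.mem_antidiagonalTuple] at hα
      have : ∑ i, α i = 0 := Finset.sum_eq_zero fun i _ => Nat.le_zero.1 (hcon i)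
      omega
    obtain ⟨j, hj⟩ := hex
    have h1 := hz α hα j hj
    rw [hSz j, div_le_iff₀ hm'] at h1
    have : b α = 0 := by nlinarith [hb α]
    rw [this, Real.zero_rpow (by positivity)]
  · have hterm : ∀ α ∈ Finset.Nat.antidiagonalTuple n m,
        b α ^ ((2 * (m : ℝ)) / ((m : ℝ) + 1)) ≤ T ^ ((2 * (m : ℝ)) / ((m : ℝ) + 1)) *
      ((1 / ((m : ℝ) + 1)) * (∑ j, α j * (b α ^ 2 / (S j * T)) +
        (Nat.multinomial Finset.univ α : ℝ) * ((∏ j, S j ^ α j) / T ^ m))) := fun α hα =>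
      bh_blei_term n m hm α (Finset.Nat.mem_antidiagonalTuple.1 hα) (b α) (hb α) S hS T hT (hz α hα)
        _ (by exact_mod_cast Nat.multinomial_pos _ _)
    refine (Finset.sum_le_sum hterm).trans ?_
    rw [← Finset.mul_sum, ← Finset.mul_sum]
    apply mul_le_of_le_one_right (by positivity)
    rw [Finset.sum_add_distrib, Finset.sum_comm]
    have e1 : ∑ α ∈ Finset.Nat.antidiagonalTuple n m,
        (Nat.multinomial Finset.univ α : ℝ) * ((∏ j, S j ^ α j) / T ^ m) = 1 := by
      have := Finset.sum_pow_eq_sum_piAntidiag (Finset.univ : Finset (Fin n)) S m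
      rw [bh_antidiag_eq]
      simp_rw [← mul_div_assoc]
      rw [← Finset.sum_div, ← this]
      exact div_self (by positivity)
    have e2 : ∑ j, ∑ α ∈ Finset.Nat.antidiagonalTuple n m, (α j : ℝ) * (b α ^ 2 / (S j * T)) = m := by
      have : ∀ j, ∑ α ∈ Finset.Nat.antidiagonalTuple n m, (α j : ℝ) * (b α ^ 2 / (S j * T)) =
          m * S j / T := by
        intro j
        simp_rw [← mul_div_assoc]
        rw [← Finset.sum_div, ← hS2 j]
        rcases (hS j).eq_or_lt with h | h
        · rw [← h]; simp
        · field_simp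
      rw [Finset.sum_congr rfl fun j _ => this j, ← Finset.sum_div, ← Finset.mul_sum, ← hTdef]
      field_simp
    rw [e1, e2]
    apply le_of_eq
    field_simp

lemma bh_orth (N : ℕ) (ω : ℂ) (hω : IsPrimitiveRoot ω N) (hN : 0 < N) (a b : ℕ)
    (ha : a < N) (hb : b < N) :
    ∑ t : Fin N, (ω ^ (t : ℕ)) ^ a * (starRingEnd ℂ) ((ω ^ (t : ℕ)) ^ b) =
      if a = b then (N : ℂ) else 0 := by
  have hω0 : ω ≠ 0 := hω.ne_zero hN.ne'
  have hnorm : ‖ω‖ = 1 := hω.norm'_eq_one hN.ne'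
  have hconj : (starRingEnd ℂ) ω = ω⁻¹ := (Complex.inv_eq_conj hnorm).symm
  have hterm : ∀ t : ℕ, (ω ^ t) ^ a * (starRingEnd ℂ) ((ω ^ t) ^ b) = (ω ^ a * (ω⁻¹) ^ b) ^ t := by
    intro t
    rw [map_pow, map_pow, hconj, mul_pow, ← pow_mul, ← pow_mul, ← pow_mul, ← pow_mul, mul_comm t a,
      mul_comm t b]
  simp_rw [hterm]
  split_ifs with h
  · subst h
    have : ω ^ a * (ω⁻¹) ^ a = 1 := by
      rw [← mul_pow, mul_inv_cancel₀ hω0, one_pow]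
    simp_rw [this]
    simp
  · rw [Fin.sum_univ_eq_sum_range (fun t => (ω ^ a * (ω⁻¹) ^ b) ^ t) N]
    have hne : ω ^ a * (ω⁻¹) ^ b ≠ 1 := by
      intro h1
      apply h
      apply hω.pow_inj ha hb
      rw [inv_pow] at h1
      field_simp at h1
      exact h1
    rw [geom_sum_eq hne]
    have : (ω ^ a * (ω⁻¹) ^ b) ^ N = 1 := by
      rw [mul_pow, ← pow_mul, ← pow_mul, mul_comm a, mul_comm b, pow_mul, pow_mul, inv_pow,
        hω.pow_eq_one]
      simp
    rw [this]; simp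

lemma bh_parseval (n m N : ℕ) (hN : m < N) (ω : ℂ) (hω : IsPrimitiveRoot ω N)
    (d : (Fin n → ℕ) → ℂ) :
    ∑ θ : Fin n → Fin N, ‖mhEval n m d (fun i => ω ^ (θ i : ℕ))‖ ^ 2 =
      (N : ℝ) ^ n * ∑ α ∈ Finset.Nat.antidiagonalTuple n m, ‖d α‖ ^ 2 := by
  have hN0 : 0 < N := by omega
  apply Complex.ofReal_injective
  push_cast
  have hsq : ∀ x : ℂ, (‖x‖ : ℂ) ^ 2 = x * (starRingEnd ℂ) x := fun x => (Complex.mul_conj' x).symm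
  simp_rw [hsq]
  have h1 : ∀ θ : Fin n → Fin N, mhEval n m d (fun i => ω ^ (θ i : ℕ)) *
      (starRingEnd ℂ) (mhEval n m d (fun i => ω ^ (θ i : ℕ))) =
      ∑ α ∈ Finset.Nat.antidiagonalTuple n m, ∑ β ∈ Finset.Nat.antidiagonalTuple n m,
        d α * (starRingEnd ℂ) (d β) *
          ∏ i, ((ω ^ (θ i : ℕ)) ^ α i * (starRingEnd ℂ) ((ω ^ (θ i : ℕ)) ^ β i)) := by
    intro θ
    unfold mhEval
    rw [map_sum, Finset.sum_mul_sum]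
    refine Finset.sum_congr rfl fun α _ => Finset.sum_congr rfl fun β _ => ?_
    rw [map_mul, map_prod, Finset.prod_mul_distrib]
    ring
  simp_rw [h1]
  rw [Finset.sum_comm, Finset.mul_sum]
  refine Finset.sum_congr rfl fun α hα => ?_
  rw [Finset.sum_comm]
  have h2 : ∀ β ∈ Finset.Nat.antidiagonalTuple n m, ∑ θ : Fin n → Fin N,
      d α * (starRingEnd ℂ) (d β) *
          ∏ i, ((ω ^ (θ i : ℕ)) ^ α i * (starRingEnd ℂ) ((ω ^ (θ i : ℕ)) ^ β i)) =
      if α = β then (N : ℂ) ^ n * (d α * (starRingEnd ℂ) (d β)) else 0 := by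
    intro β hβ
    rw [← Finset.mul_sum]
    have h3 := Finset.sum_prod_piFinset (Finset.univ : Finset (Fin N))
      (fun (i : Fin n) t => (ω ^ (t : ℕ)) ^ α i * (starRingEnd ℂ) ((ω ^ (t : ℕ)) ^ β i))
    rw [Fintype.piFinset_univ] at h3
    rw [h3]
    have h4 : ∀ i, ∑ t : Fin N, (ω ^ (t : ℕ)) ^ α i * (starRingEnd ℂ) ((ω ^ (t : ℕ)) ^ β i) =
        if α i = β i then (N : ℂ) else 0 := fun i =>
      bh_orth N ω hω hN0 _ _ ((bh_le_of_mem hα i).trans_lt hN) ((bh_le_of_mem hβ i).trans_lt hN)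
    simp_rw [h4]
    split_ifs with h
    · subst h
      simp
      ring
    · have : ∃ i, α i ≠ β i := by
        by_contra hcon
        push Not at hcon
        exact h (funext hcon)
      obtain ⟨i, hi⟩ := this
      rw [Finset.prod_eq_zero (Finset.mem_univ i) (by simp [hi]), mul_zero]
  rw [Finset.sum_congr rfl h2, Finset.sum_ite_eq, if_pos hα]

lemma bh_count (n k : ℕ) (α : Fin n → ℕ) (hα : ∑ i, α i = 2 * k) :
    #((Finset.Nat.antidiagonalTuple n k).filter fun β => ∀ i, β i ≤ α i) ≤ (2 * k).choose k := by
  classical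
  let M : (Fin n → ℕ) → Multiset (Fin n) := fun β => ∑ i, β i • {i}
  have hcount : ∀ β i, (M β).count i = β i := by
    intro β i
    simp [M, Multiset.count_sum', Multiset.count_nsmul, Multiset.count_singleton]
  have hcard : ∀ β, (M β).card = ∑ i, β i := by
    intro β
    simp [M]
  have h1 : ((M α).powersetCard k).toFinset.card ≤ (2 * k).choose k := by
    refine (Multiset.toFinset_card_le _).trans ?_
    rw [Multiset.card_powersetCard, hcard, hα]
  refine le_trans ?_ h1
  apply Finset.card_le_card_of_injOn M
  · intro β hβ
    simp only [Finset.coe_filter, Set.mem_ofPred_eq, Finset.Nat.mem_antidiagonalTuple] at hβ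
    simp only [Finset.mem_coe, Multiset.mem_toFinset, Multiset.mem_powersetCard]
    refine ⟨?_, ?_⟩
    · rw [Multiset.le_iff_count]
      intro i
      rw [hcount, hcount]
      exact hβ.2 i
    · rw [hcard, hβ.1]
  · intro β _ γ _ h
    funext i
    rw [← hcount β i, ← hcount γ i, h]

lemma bh_sq_eval (n k : ℕ) (c : (Fin n → ℕ) → ℂ) (z : Fin n → ℂ) :
    mhEval n k c z ^ 2 = mhEval n (2 * k) (fun α =>
      ∑ q ∈ (Finset.Nat.antidiagonalTuple n k ×ˢ Finset.Nat.antidiagonalTuple n k).filter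
        (fun q => q.1 + q.2 = α), c q.1 * c q.2) z := by
  unfold mhEval
  rw [sq, Finset.sum_mul_sum, ← Finset.sum_product']
  rw [← Finset.sum_fiberwise_of_maps_to (g := fun q : (Fin n → ℕ) × (Fin n → ℕ) => q.1 + q.2)
    (t := Finset.Nat.antidiagonalTuple n (2 * k))]
  · refine Finset.sum_congr rfl fun α _ => ?_
    rw [Finset.sum_mul]
    refine Finset.sum_congr rfl fun q hq => ?_
    rw [Finset.mem_filter] at hq
    rw [← hq.2]
    simp_rw [Pi.add_apply, pow_add]
    rw [Finset.prod_mul_distrib]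
    ring
  · intro q hq
    rw [Finset.mem_product, Finset.Nat.mem_antidiagonalTuple, Finset.Nat.mem_antidiagonalTuple] at hq
    rw [Finset.Nat.mem_antidiagonalTuple]
    simp only [Pi.add_apply, Finset.sum_add_distrib]
    omega

lemma bh_four (n k : ℕ) (c : (Fin n → ℕ) → ℂ) :
    ∑ α ∈ Finset.Nat.antidiagonalTuple n (2 * k), ‖∑ q ∈ (Finset.Nat.antidiagonalTuple n k ×ˢ
      Finset.Nat.antidiagonalTuple n k).filter (fun q => q.1 + q.2 = α), c q.1 * c q.2‖ ^ 2 ≤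
      ((2 * k).choose k : ℝ) * (∑ β ∈ Finset.Nat.antidiagonalTuple n k, ‖c β‖ ^ 2) ^ 2 := by
  have h1 : ∀ α ∈ Finset.Nat.antidiagonalTuple n (2 * k), ‖∑ q ∈ (Finset.Nat.antidiagonalTuple n k ×ˢ
      Finset.Nat.antidiagonalTuple n k).filter (fun q => q.1 + q.2 = α), c q.1 * c q.2‖ ^ 2 ≤
      ((2 * k).choose k : ℝ) * ∑ q ∈ (Finset.Nat.antidiagonalTuple n k ×ˢ
      Finset.Nat.antidiagonalTuple n k).filter (fun q => q.1 + q.2 = α),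
        (‖c q.1‖ ^ 2 * ‖c q.2‖ ^ 2) := by
    intro α hα
    have hcard : #((Finset.Nat.antidiagonalTuple n k ×ˢ
        Finset.Nat.antidiagonalTuple n k).filter (fun q => q.1 + q.2 = α)) ≤ (2 * k).choose k := by
      refine le_trans ?_ (bh_count n k α (Finset.Nat.mem_antidiagonalTuple.1 hα))
      apply Finset.card_le_card_of_injOn Prod.fst
      · intro q hq
        simp only [Finset.coe_filter, Set.mem_ofPred_eq, Finset.mem_product] at hq ⊢
        refine ⟨hq.1.1, fun i => ?_⟩
        rw [← hq.2]
        simp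
      · intro q hq r hr h
        simp only [Finset.coe_filter, Set.mem_ofPred_eq] at hq hr
        have := hq.2.trans hr.2.symm
        rw [h] at this
        exact Prod.ext h (add_left_cancel this)
    calc _ ≤ (∑ q ∈ (Finset.Nat.antidiagonalTuple n k ×ˢ
        Finset.Nat.antidiagonalTuple n k).filter (fun q => q.1 + q.2 = α), ‖c q.1 * c q.2‖) ^ 2 := by
          gcongr
          exact norm_sum_le _ _
      _ ≤ _ := sq_sum_le_card_mul_sum_sq
      _ ≤ _ := by
          simp_rw [norm_mul, mul_pow]
          gcongr
  refine (Finset.sum_le_sum h1).trans ?_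
  rw [← Finset.mul_sum]
  refine mul_le_mul_of_nonneg_left (le_of_eq ?_) (by positivity)
  rw [Finset.sum_fiberwise_of_maps_to (g := fun q : (Fin n → ℕ) × (Fin n → ℕ) => q.1 + q.2)
    (t := Finset.Nat.antidiagonalTuple n (2 * k))
    (f := fun q => (‖c q.1‖ ^ 2 * ‖c q.2‖ ^ 2)), Finset.sum_product, sq, Finset.sum_mul_sum]
  intro q hq
  rw [Finset.mem_product, Finset.Nat.mem_antidiagonalTuple, Finset.Nat.mem_antidiagonalTuple] at hq
  rw [Finset.Nat.mem_antidiagonalTuple]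
  simp only [Pi.add_apply, Finset.sum_add_distrib]
  omega

lemma bh_interp {ι : Type*} (s : Finset ι) (F : ι → ℝ) (hF : ∀ i, 0 ≤ F i) (C M B : ℝ)
    (hM : 0 < M) (hC : 0 ≤ C) (hB : 0 ≤ B)
    (h2 : ∑ i ∈ s, F i ^ 2 = M * B) (h4 : ∑ i ∈ s, F i ^ 4 ≤ M * (C * B ^ 2)) :
    M * Real.sqrt B ≤ Real.sqrt C * ∑ i ∈ s, F i := by
  have hA0 : 0 ≤ ∑ i ∈ s, F i := Finset.sum_nonneg fun i _ => hF i
  rcases hB.eq_or_lt with h0 | h0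
  · rw [← h0]; simp; positivity
  have c1 : (∑ i ∈ s, F i ^ 2) ^ 2 ≤ (∑ i ∈ s, F i) * ∑ i ∈ s, F i ^ 3 :=
    Finset.sum_sq_le_sum_mul_sum_of_sq_le_mul s (fun i _ => hF i) (fun i _ => pow_nonneg (hF i) 3)
      (fun i _ => le_of_eq (by ring))
  have c2 : (∑ i ∈ s, F i ^ 3) ^ 2 ≤ (∑ i ∈ s, F i ^ 2) * ∑ i ∈ s, F i ^ 4 :=
    Finset.sum_sq_le_sum_mul_sum_of_sq_le_mul s (fun i _ => by positivity)
      (fun i _ => by positivity) (fun i _ => le_of_eq (by ring))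
  set A := ∑ i ∈ s, F i
  set E := ∑ i ∈ s, F i ^ 3
  rw [h2] at c1 c2
  have c3 : E ^ 2 ≤ M * B * (M * (C * B ^ 2)) := c2.trans (by gcongr)
  have c4 : ((M * B) ^ 2) ^ 2 ≤ (A * E) ^ 2 := by gcongr
  have c5 : (M * B) ^ 4 ≤ A ^ 2 * (M * B * (M * (C * B ^ 2))) := by
    calc (M * B) ^ 4 = ((M * B) ^ 2) ^ 2 := by ring
      _ ≤ (A * E) ^ 2 := c4
      _ = A ^ 2 * E ^ 2 := by ring
      _ ≤ _ := by gcongr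
  have c6 : M ^ 2 * B ≤ C * A ^ 2 := by
    have : (M ^ 2 * B ^ 3) * (M ^ 2 * B) ≤ (M ^ 2 * B ^ 3) * (C * A ^ 2) := by
      nlinarith [c5]
    exact le_of_mul_le_mul_left this (by positivity)
  have := Real.sqrt_le_sqrt c6
  rwa [Real.sqrt_mul (by positivity), Real.sqrt_mul hC, Real.sqrt_sq hM.le, Real.sqrt_sq hA0] at this

lemma bh_hyper (n k N : ℕ) (hN : 2 * k < N) (ω : ℂ) (hω : IsPrimitiveRoot ω N)
    (c : (Fin n → ℕ) → ℂ) :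
    (N : ℝ) ^ n * Real.sqrt (∑ β ∈ Finset.Nat.antidiagonalTuple n k, ‖c β‖ ^ 2) ≤
      Real.sqrt ((2 * k).choose k) *
        ∑ θ : Fin n → Fin N, ‖mhEval n k c (fun i => ω ^ (θ i : ℕ))‖ := by
  have hN0 : (0 : ℝ) < N := by exact_mod_cast (by omega : 0 < N)
  apply bh_interp _ _ (fun _ => norm_nonneg _) _ _ _ (by positivity) (by positivity)
    (Finset.sum_nonneg fun _ _ => by positivity)
  · exact bh_parseval n k N (by omega) ω hω c
  · have h := bh_parseval n (2 * k) N hN ω hω (fun α =>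
      ∑ q ∈ (Finset.Nat.antidiagonalTuple n k ×ˢ Finset.Nat.antidiagonalTuple n k).filter
        (fun q => q.1 + q.2 = α), c q.1 * c q.2)
    simp_rw [← bh_sq_eval, norm_pow, ← pow_mul] at h
    norm_num at h
    rw [h]
    gcongr
    exact bh_four n k c

lemma bh_shift {M : Type*} [AddCommMonoid M] (n k : ℕ) (j : Fin n) (g : (Fin n → ℕ) → M)
    (hg : ∀ α, α j = 0 → g α = 0) :
    ∑ α ∈ Finset.Nat.antidiagonalTuple n (k + 1), g α =
      ∑ β ∈ Finset.Nat.antidiagonalTuple n k, g (β + Pi.single j 1) := by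
  symm
  apply Finset.sum_of_injOn (fun β => β + Pi.single j 1)
  · intro β _ γ _ h
    exact add_right_cancel h
  · intro β hβ
    simp only [Finset.mem_coe, Finset.Nat.mem_antidiagonalTuple] at hβ ⊢
    simp [Finset.sum_add_distrib, hβ]
  · intro α hα hα2
    apply hg
    by_contra hne
    apply hα2
    have e : α - Pi.single j 1 + Pi.single j 1 = α := by
      funext i
      by_cases hi : i = j
      · subst hi
        simp
        omega
      · simp [hi]
    refine ⟨α - Pi.single j 1, ?_, e⟩
    simp only [Finset.mem_coe, Finset.Nat.mem_antidiagonalTuple] at hα ⊢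
    rw [← e] at hα
    simp only [Pi.add_apply, Finset.sum_add_distrib] at hα
    simpa using hα
  · intro β _
    rfl

/-- coefficients of the partial derivative -/
noncomputable def bhD (n : ℕ) (a : (Fin n → ℕ) → ℂ) (j : Fin n) (β : Fin n → ℕ) : ℂ :=
  ((β j : ℂ) + 1) * a (β + Pi.single j 1)

lemma bh_deriv (n k : ℕ) (a : (Fin n → ℕ) → ℂ) (z w : Fin n → ℂ) :
    HasDerivAt (fun l : ℂ => mhEval n (k + 1) a (fun i => z i + l * w i))
      (∑ j, w j * mhEval n k (bhD n a j) z) 0 := by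
  have h1 : ∀ (i : Fin n) (e : ℕ), HasDerivAt (fun l : ℂ => (z i + l * w i) ^ e)
      (e * z i ^ (e - 1) * w i) 0 := by
    intro i e
    have h : HasDerivAt (fun l : ℂ => z i + l * w i) (w i) 0 := by
      simpa using ((hasDerivAt_id (0 : ℂ)).mul_const (w i)).const_add (z i)
    simpa using h.fun_pow e
  have h2 : HasDerivAt (fun l : ℂ => mhEval n (k + 1) a (fun i => z i + l * w i))
      (∑ α ∈ Finset.Nat.antidiagonalTuple n (k + 1), a α *
        ∑ j, (∏ i ∈ Finset.univ.erase j, z i ^ α i) * (α j * z j ^ (α j - 1) * w j)) 0 := by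
    unfold mhEval
    apply HasDerivAt.fun_sum
    intro α _
    apply HasDerivAt.const_mul
    have := HasDerivAt.fun_finsetProd (u := Finset.univ) (fun i _ => h1 i (α i))
    simpa using this
  convert h2 using 1
  simp_rw [Finset.mul_sum]
  rw [Finset.sum_comm]
  refine Finset.sum_congr rfl fun j _ => ?_
  rw [bh_shift n k j _ (by intro α h; simp [h])]
  unfold mhEval bhD
  rw [Finset.mul_sum]
  refine Finset.sum_congr rfl fun β _ => ?_
  rw [← Finset.mul_prod_erase Finset.univ (fun i => z i ^ β i) (Finset.mem_univ j)]
  have : ∏ i ∈ Finset.univ.erase j, z i ^ (β + Pi.single j 1 : Fin n → ℕ) i =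
      ∏ i ∈ Finset.univ.erase j, z i ^ β i := by
    refine Finset.prod_congr rfl fun i hi => ?_
    simp [Finset.ne_of_mem_erase hi]
  rw [this]
  simp
  ring

lemma bh_bdd (n m : ℕ) (a : (Fin n → ℕ) → ℂ) :
    BddAbove {x : ℝ | ∃ z : Fin n → ℂ, (∀ i, ‖z i‖ < 1) ∧ x = ‖mhEval n m a z‖} := by
  refine ⟨∑ α ∈ Finset.Nat.antidiagonalTuple n m, ‖a α‖, ?_⟩
  rintro x ⟨z, hz, rfl⟩
  unfold mhEval
  refine (norm_sum_le _ _).trans (Finset.sum_le_sum fun α _ => ?_)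
  rw [norm_mul, norm_prod]
  apply mul_le_of_le_one_right (norm_nonneg _)
  apply Finset.prod_le_one
  · intro i _; positivity
  · intro i _
    rw [norm_pow]
    exact pow_le_one₀ (norm_nonneg _) (hz i).le

lemma bh_sup_nonneg (n m : ℕ) (a : (Fin n → ℕ) → ℂ) : 0 ≤ polydiscSup n m a := by
  apply Real.sSup_nonneg
  rintro x ⟨z, hz, rfl⟩
  exact norm_nonneg _

lemma bh_homog (n m : ℕ) (a : (Fin n → ℕ) → ℂ) (s : ℂ) (z : Fin n → ℂ) :
    mhEval n m a (fun i => s * z i) = s ^ m * mhEval n m a z := by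
  unfold mhEval
  rw [Finset.mul_sum]
  refine Finset.sum_congr rfl fun α hα => ?_
  simp_rw [mul_pow]
  rw [Finset.prod_mul_distrib, Finset.prod_pow_eq_pow_sum, Finset.Nat.mem_antidiagonalTuple.1 hα]
  ring

lemma bh_le_sup (n m : ℕ) (a : (Fin n → ℕ) → ℂ) (R : ℝ) (hR : 0 ≤ R) (u : Fin n → ℂ)
    (hu : ∀ i, ‖u i‖ ≤ R) : ‖mhEval n m a u‖ ≤ R ^ m * polydiscSup n m a := by
  have h1 : ∀ s : ℝ, R < s → ‖mhEval n m a u‖ ≤ s ^ m * polydiscSup n m a := by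
    intro s hs
    have hs0 : 0 < s := by linarith
    have e : u = fun i => (s : ℂ) * (u i / s) := by
      funext i
      have : (s : ℂ) ≠ 0 := by exact_mod_cast hs0.ne'
      field_simp
    rw [e, bh_homog, norm_mul, norm_pow, Complex.norm_real, Real.norm_of_nonneg hs0.le]
    apply mul_le_mul_of_nonneg_left _ (by positivity)
    apply le_csSup (bh_bdd n m a)
    refine ⟨_, fun i => ?_, rfl⟩
    rw [norm_div, Complex.norm_real, Real.norm_of_nonneg hs0.le, div_lt_one hs0]
    exact (hu i).trans_lt hs
  have h2 : Filter.Tendsto (fun s : ℝ => s ^ m * polydiscSup n m a) (nhdsWithin R (Set.Ioi R))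
      (nhds (R ^ m * polydiscSup n m a)) := by
    apply Filter.Tendsto.mono_left _ nhdsWithin_le_nhds
    exact Continuous.tendsto (by fun_prop) R
  exact ge_of_tendsto h2 (by filter_upwards [self_mem_nhdsWithin] with s hs using h1 s hs)

lemma bh_grad_r (n k : ℕ) (a : (Fin n → ℕ) → ℂ) (z : Fin n → ℂ) (hz : ∀ i, ‖z i‖ ≤ 1)
    (r : ℝ) (hr : 0 < r) :
    ∑ j, ‖mhEval n k (bhD n a j) z‖ ≤ (1 + r) ^ (k + 1) * polydiscSup n (k + 1) a / r := by
  set D : Fin n → ℂ := fun j => mhEval n k (bhD n a j) z with hD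
  set w : Fin n → ℂ := fun j => (starRingEnd ℂ) (D j) / ‖D j‖ with hw
  have hwn : ∀ j, ‖w j‖ ≤ 1 := by
    intro j
    simp only [hw, norm_div, RCLike.norm_conj, Complex.norm_real, norm_norm]
    exact div_self_le_one _
  have hwD : ∀ j, w j * D j = (‖D j‖ : ℂ) := by
    intro j
    simp only [hw]
    rw [div_mul_eq_mul_div, mul_comm, Complex.mul_conj', sq, mul_div_assoc]
    by_cases h : (‖D j‖ : ℂ) = 0
    · rw [h]; simp
    · rw [div_self h, mul_one]
  have hd := bh_deriv n k a z w
  have hdiff : Differentiable ℂ (fun l : ℂ => mhEval n (k + 1) a (fun i => z i + l * w i)) := by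
    unfold mhEval
    fun_prop
  have h := Complex.norm_deriv_le_of_forall_mem_sphere_norm_le (c := 0) hr hdiff.diffContOnCl
    (C := (1 + r) ^ (k + 1) * polydiscSup n (k + 1) a) (by
      intro l hl
      apply bh_le_sup _ _ _ _ (by positivity)
      intro i
      refine (norm_add_le _ _).trans ?_
      rw [norm_mul]
      rw [mem_sphere_zero_iff_norm] at hl
      rw [hl]
      have := hz i
      have := hwn i
      nlinarith)
  rw [hd.deriv] at h
  refine le_trans (le_of_eq ?_) h
  have : ∑ j, w j * mhEval n k (bhD n a j) z = ((∑ j, ‖D j‖ : ℝ) : ℂ) := by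
    push_cast
    exact Finset.sum_congr rfl fun j _ => hwD j
  rw [this, Complex.norm_real, Real.norm_of_nonneg (Finset.sum_nonneg fun _ _ => norm_nonneg _)]

lemma bh_grad (n k : ℕ) (a : (Fin n → ℕ) → ℂ) (z : Fin n → ℂ) (hz : ∀ i, ‖z i‖ ≤ 1) :
    ∑ j, ‖mhEval n k (bhD n a j) z‖ ≤
      ((k : ℝ) + 1) ^ (k + 1) / (k : ℝ) ^ k * polydiscSup n (k + 1) a := by
  rcases Nat.eq_zero_or_pos k with h0 | h0
  · subst h0
    have h1 := bh_grad_r n 0 a z hz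
    have hs := bh_sup_nonneg n (0 + 1) a
    simp only [Nat.cast_zero, zero_add, pow_one, pow_zero, div_one, one_mul] at h1 hs ⊢
    set X := ∑ j, ‖mhEval n 0 (bhD n a j) z‖
    apply le_of_forall_pos_le_add
    intro ε hε
    have := h1 ((polydiscSup n 1 a + 1) / ε) (by positivity)
    refine this.trans ?_
    rw [div_le_iff₀ (by positivity)]
    field_simp
    nlinarith
  · have hk : (0 : ℝ) < k := by exact_mod_cast h0
    refine (bh_grad_r n k a z hz (1 / k) (by positivity)).trans (le_of_eq ?_)
    have : (1 : ℝ) + 1 / k = (k + 1) / k := by field_simp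
    rw [this, div_pow]
    field_simp
    ring

lemma bh_arith (k : ℕ) :
    Real.sqrt ((2 * k).choose k) * (Nat.factorial k : ℝ) ≤ Real.sqrt 2 ^ k * (k : ℝ) ^ k := by
  have h1 : (2 * k).choose k * (k.factorial * k.factorial) ≤ 2 ^ k * (k ^ k * k ^ k) := by
    have e : (2 * k).choose k * (k.factorial * k.factorial) = (2 * k).factorial := by
      have := Nat.choose_mul_factorial_mul_factorial (n := 2 * k) (k := k) (by omega)
      rw [← this, show 2 * k - k = k by omega]
      ring
    rw [e]
    refine (Nat.factorial_two_mul_le k).trans ?_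
    rw [mul_pow, mul_assoc]
    gcongr
    exact Nat.factorial_le_pow k
  have h2 : ((2 * k).choose k : ℝ) * (Nat.factorial k : ℝ) ^ 2 ≤ 2 ^ k * ((k : ℝ) ^ k) ^ 2 := by
    rw [sq, sq]; exact_mod_cast h1
  have h3 := Real.sqrt_le_sqrt h2
  rw [Real.sqrt_mul (by positivity), Real.sqrt_mul (by positivity), Real.sqrt_sq (by positivity),
    Real.sqrt_sq (by positivity)] at h3
  have : Real.sqrt (2 ^ k) = Real.sqrt 2 ^ k := by
    rw [Real.sqrt_eq_iff_mul_self_eq (by positivity) (by positivity), ← mul_pow]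
    norm_num
  rwa [this] at h3

/-- Bohnenblust–Hille inequality for `m`-homogeneous polynomials with the explicit
constant `√2^(m-1) · √m · m^m/m!` obtained in the paper's proof. -/
theorem bohnenblust_hille_explicit_constant (m n : ℕ) (hm : 0 < m) (hn : 0 < n)
    (a : (Fin n → ℕ) → ℂ) :
    (∑ α ∈ Finset.Nat.antidiagonalTuple n m,
        ‖a α‖ ^ ((2 * (m : ℝ)) / ((m : ℝ) + 1))) ^ (((m : ℝ) + 1) / (2 * (m : ℝ)))
      ≤ Real.sqrt 2 ^ (m - 1) * Real.sqrt m * ((m : ℝ) ^ m / (Nat.factorial m : ℝ)) *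
          polydiscSup n m a := by
  obtain ⟨k, rfl⟩ : ∃ k, m = k + 1 := ⟨m - 1, by omega⟩
  have hk1 : (0 : ℝ) < ((k + 1 : ℕ) : ℝ) := by positivity
  set S : Fin n → ℝ := fun j => Real.sqrt ((∑ α ∈ Finset.Nat.antidiagonalTuple n (k + 1),
    (α j : ℝ) * ‖a α‖ ^ 2) / ((k + 1 : ℕ) : ℝ)) with hSdef
  refine (bh_blei n (k + 1) hm (fun α => ‖a α‖) (fun α => norm_nonneg _) S
    (fun j => Real.sqrt_nonneg _) ?_).trans ?_
  · intro j
    rw [hSdef]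
    simp only
    rw [Real.sq_sqrt (div_nonneg (Finset.sum_nonneg fun _ _ => by positivity) hk1.le)]
    field_simp
  set N := 2 * k + 1 with hNdef
  have hN0 : (0 : ℝ) < N := by positivity
  have hω := Complex.isPrimitiveRoot_exp N (by omega)
  set ω := Complex.exp (2 * Real.pi * Complex.I / N) with hωdef
  have hωn : ‖ω‖ = 1 := hω.norm'_eq_one (by omega)
  have hP := bh_sup_nonneg n (k + 1) a
  set X := polydiscSup n (k + 1) a with hX
  have hS : ∀ j, S j ≤ Real.sqrt (∑ β ∈ Finset.Nat.antidiagonalTuple n k, ‖bhD n a j β‖ ^ 2) /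
      Real.sqrt ((k + 1 : ℕ) : ℝ) := by
    intro j
    rw [hSdef]
    simp only
    rw [Real.sqrt_div (Finset.sum_nonneg fun _ _ => by positivity)]
    gcongr
    rw [bh_shift n k j _ (by intro α h; simp [h])]
    refine Finset.sum_le_sum fun β _ => ?_
    unfold bhD
    rw [norm_mul, mul_pow]
    have : ‖(β j : ℂ) + 1‖ = (β j : ℝ) + 1 := by
      have : ((β j : ℂ) + 1) = ((β j + 1 : ℕ) : ℂ) := by push_cast; rfl
      rw [this, Complex.norm_natCast]; push_cast; rfl
    rw [this]
    gcongr
    simp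
    have : (0 : ℝ) ≤ β j := by positivity
    nlinarith
  have hsum : ∑ j, Real.sqrt (∑ β ∈ Finset.Nat.antidiagonalTuple n k, ‖bhD n a j β‖ ^ 2) ≤
      Real.sqrt ((2 * k).choose k) * (((k : ℝ) + 1) ^ (k + 1) / (k : ℝ) ^ k * X) := by
    have hNn : (0 : ℝ) < (N : ℝ) ^ n := by positivity
    refine le_of_mul_le_mul_left ?_ hNn
    rw [Finset.mul_sum]
    refine (Finset.sum_le_sum fun j _ => bh_hyper n k N (by omega) ω hω (bhD n a j)).trans ?_
    rw [← Finset.mul_sum, Finset.sum_comm, mul_left_comm]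
    gcongr
    refine (Finset.sum_le_sum fun θ _ => bh_grad n k a _ ?_).trans ?_
    · intro i
      simp [hωn]
    · simp [hX]
  have hfin : ∑ j, S j ≤ Real.sqrt ((2 * k).choose k) * (((k : ℝ) + 1) ^ (k + 1) / (k : ℝ) ^ k * X)
      / Real.sqrt ((k + 1 : ℕ) : ℝ) := by
    refine (Finset.sum_le_sum fun j _ => hS j).trans ?_
    rw [← Finset.sum_div]
    gcongr
  refine hfin.trans ?_
  have hkk : (0 : ℝ) < (k : ℝ) ^ k := by
    rcases Nat.eq_zero_or_pos k with h | h
    · simp [h]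
    · have : (0 : ℝ) < k := by exact_mod_cast h
      positivity
  have har := bh_arith k
  have hfac : (0 : ℝ) < Nat.factorial k := by positivity
  have hsq : Real.sqrt ((k + 1 : ℕ) : ℝ) * Real.sqrt ((k + 1 : ℕ) : ℝ) = k + 1 := by
    rw [Real.mul_self_sqrt hk1.le]; push_cast; rfl
  have hsp : 0 < Real.sqrt ((k + 1 : ℕ) : ℝ) := Real.sqrt_pos.2 hk1
  rw [div_le_iff₀ hsp, Nat.factorial_succ, Nat.add_sub_cancel]
  have har2 : Real.sqrt ((2 * k).choose k) / (k : ℝ) ^ k ≤ Real.sqrt 2 ^ k / Nat.factorial k := by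
    rw [div_le_div_iff₀ hkk hfac]; exact har
  calc _ = Real.sqrt ((2 * k).choose k) / (k : ℝ) ^ k * (((k : ℝ) + 1) ^ (k + 1) * X) := by ring
    _ ≤ Real.sqrt 2 ^ k / Nat.factorial k * (((k : ℝ) + 1) ^ (k + 1) * X) := by gcongr
    _ = Real.sqrt 2 ^ k * (((k : ℝ) + 1) ^ (k + 1) / (((k : ℝ) + 1) * Nat.factorial k)) * X *
        (Real.sqrt ((k + 1 : ℕ) : ℝ) * Real.sqrt ((k + 1 : ℕ) : ℝ)) := by
          rw [hsq]; field_simp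
    _ = _ := by push_cast; ring
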